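/- Fix integers k ≥ s ≥ 1 and probability distributions p_1, …, p_k on Y. If Z > 0, then the jinx distribution jinx(y) := g(y)/Z satisfies R_jinx = 1/Z, and every probability distribution q on Y with q ≠ jinx satisfies R_q > 1/Z; in particular, the minimum of R_q over all probability distributions q on Y equals 1/Z and jinx is its unique minimizer. If instead Z = 0, then R_q = ∞ for every probability distribution q on Y. -/

import Mathlib

/-!
The argument rests on one equivalence (`worstRob_le_iff`): for finite `C`, `R_q ≤ C` holds exactly
when `q ≤ C · g` pointwise, because the least of the averages `avg_T(y)` is attained and equals
`g(y)`. Summing over `Y` gives `1 ≤ R_q · Z` whenever `R_q < ∞` (`one_le_worstRob_mul`), which is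
both the lower bound `1/Z ≤ R_q` and, for `Z = 0`, the impossibility of a finite `R_q`.
If `R_q ≤ 1/Z`, then `q ≤ g/Z` pointwise; both sides sum to `1`, so they coincide.
-/

open scoped BigOperators ENNReal

/-- `p` is a probability distribution: nonnegative and summing to 1. -/
def IsDist {α : Type*} (p : α → ℝ) : Prop := (∀ a, 0 ≤ p a) ∧ HasSum p 1

/-- `g(y) := min over T ⊆ {1,…,k} with |T| = s of avg_T(y)`, the average of the `s`
smallest of the `k` values `p_1(y), …, p_k(y)`. -/
noncomputable def gmin {Y : Type*} {k : ℕ} (s : ℕ) (p : Fin k → Y → ℝ) (y : Y) : ℝ :=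
  sInf {v : ℝ | ∃ T : Finset (Fin k), T.card = s ∧ v = (∑ i ∈ T, p i y) / s}

/-- worst-case robustness `R_q := sup_{y, |T| = s} q(y)/avg_T(y)`, computed in `[0,∞]`
(so `0/0 = 0` and `c/0 = ∞` for `c > 0`). -/
noncomputable def worstRob {Y : Type*} {k : ℕ} (s : ℕ) (p : Fin k → Y → ℝ) (q : Y → ℝ) :
    ℝ≥0∞ :=
  ⨆ (y : Y) (T : Finset (Fin k)) (_ : T.card = s),
    ENNReal.ofReal (q y) / ENNReal.ofReal ((∑ i ∈ T, p i y) / s)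

/-- The infimum defining `gmin` is attained, so it is a true minimum over the sets of size `s`. -/
lemma exists_gmin_eq {Y : Type*} {k s : ℕ} (hsk : s ≤ k) (p : Fin k → Y → ℝ) (y : Y) :
    ∃ T : Finset (Fin k), T.card = s ∧ gmin s p y = (∑ i ∈ T, p i y) / s ∧
      ∀ T' : Finset (Fin k), T'.card = s → gmin s p y ≤ (∑ i ∈ T', p i y) / s := by
  set S : Set ℝ := {v : ℝ | ∃ T : Finset (Fin k), T.card = s ∧ v = (∑ i ∈ T, p i y) / s} with hS
  have hfin : S.Finite := by
    refine (Set.finite_range fun T : Finset (Fin k) => (∑ i ∈ T, p i y) / (s : ℝ)).subset ?_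
    rintro v ⟨T, -, rfl⟩
    exact ⟨T, rfl⟩
  have hne : S.Nonempty := by
    obtain ⟨T, -, hT⟩ := Finset.exists_subset_card_eq
      (s := (Finset.univ : Finset (Fin k))) (n := s) (by simpa using hsk)
    exact ⟨_, T, hT, rfl⟩
  obtain ⟨T, hT, h⟩ := hne.csInf_mem hfin
  exact ⟨T, hT, h, fun T' hT' => csInf_le hfin.bddBelow ⟨T', hT', rfl⟩⟩

lemma gmin_nonneg {Y : Type*} {k s : ℕ} (hsk : s ≤ k) {p : Fin k → Y → ℝ}
    (hp : ∀ i, IsDist (p i)) (y : Y) : 0 ≤ gmin s p y := by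
  obtain ⟨T, -, h, -⟩ := exists_gmin_eq hsk p y
  rw [h]
  exact div_nonneg (Finset.sum_nonneg fun i _ => (hp i).1 y) s.cast_nonneg

lemma summable_gmin {Y : Type*} {k s : ℕ} (hsk : s ≤ k) {p : Fin k → Y → ℝ}
    (hp : ∀ i, IsDist (p i)) : Summable (gmin s p) := by
  obtain ⟨T, -, hT⟩ := Finset.exists_subset_card_eq
    (s := (Finset.univ : Finset (Fin k))) (n := s) (by simpa using hsk)
  refine Summable.of_nonneg_of_le (gmin_nonneg hsk hp)
    (fun y => ?_) ((summable_sum fun i (_ : i ∈ T) => (hp i).2.summable).div_const (s : ℝ))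
  obtain ⟨-, -, -, h⟩ := exists_gmin_eq hsk p y
  exact h T hT

/-- The finiteness of `C` is needed: with `C = ∞` and `g(y) = 0 < q(y)` the left side holds while
`∞ * 0 = 0` makes the right side fail. -/
lemma worstRob_le_iff {Y : Type*} {k s : ℕ} (hsk : s ≤ k) (p : Fin k → Y → ℝ) (q : Y → ℝ)
    {C : ℝ≥0∞} (hC : C ≠ ⊤) :
    worstRob s p q ≤ C ↔ ∀ y, ENNReal.ofReal (q y) ≤ C * ENNReal.ofReal (gmin s p y) := by
  simp only [worstRob, iSup_le_iff,
    ENNReal.div_le_iff_le_mul (Or.inr hC) (Or.inl ENNReal.ofReal_ne_top)]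
  refine forall_congr' fun y => ?_
  obtain ⟨T, hT, h, hmin⟩ := exists_gmin_eq hsk p y
  constructor
  · intro H
    rw [h]
    exact H T hT
  · intro H T' hT'
    exact H.trans (by gcongr; exact hmin T' hT')

lemma one_le_worstRob_mul {Y : Type*} {k s : ℕ} (hsk : s ≤ k) {p : Fin k → Y → ℝ}
    (hp : ∀ i, IsDist (p i)) {q : Y → ℝ} (hq : IsDist q) (hfin : worstRob s p q ≠ ⊤) :
    1 ≤ worstRob s p q * ENNReal.ofReal (∑' y, gmin s p y) := by
  have h := (worstRob_le_iff hsk p q hfin).1 le_rfl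
  rw [ENNReal.ofReal_tsum_of_nonneg (gmin_nonneg hsk hp) (summable_gmin hsk hp),
    ← ENNReal.tsum_mul_left]
  calc (1 : ℝ≥0∞) = ENNReal.ofReal (∑' y, q y) := by rw [hq.2.tsum_eq, ENNReal.ofReal_one]
    _ = ∑' y, ENNReal.ofReal (q y) := ENNReal.ofReal_tsum_of_nonneg hq.1 hq.2.summable
    _ ≤ _ := ENNReal.tsum_le_tsum h

/-- **Minmax robustness.** If `Z > 0`, the jinx distribution `jinx(y) = g(y)/Z` satisfies
`R_jinx = 1/Z`, every probability distribution `q ≠ jinx` on `Y` has `R_q > 1/Z`, and the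
minimum of `R_q` over all probability distributions on `Y` is `1/Z` (uniquely attained at
`jinx`). If `Z = 0`, then `R_q = ∞` for every probability distribution `q` on `Y`. -/
theorem minmax_robustness
    {Y : Type*} [Countable Y] [Nonempty Y]
    (k s : ℕ) (hs1 : 1 ≤ s) (hsk : s ≤ k)
    (p : Fin k → Y → ℝ) (hp : ∀ i, IsDist (p i)) :
    let g : Y → ℝ := gmin s p
    let Z : ℝ := ∑' y, g y
    let jinx : Y → ℝ := fun y => g y / Z
    (0 < Z →
      worstRob s p jinx = (ENNReal.ofReal Z)⁻¹ ∧
      (∀ q : Y → ℝ, IsDist q → q ≠ jinx → (ENNReal.ofReal Z)⁻¹ < worstRob s p q) ∧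
      (⨅ q : {f : Y → ℝ // IsDist f}, worstRob s p q.1) = (ENNReal.ofReal Z)⁻¹) ∧
    (Z = 0 → ∀ q : Y → ℝ, IsDist q → worstRob s p q = ⊤) := by
  intro g Z jinx
  refine ⟨fun hZ => ?_, fun hZ q hq => ?_⟩
  · have hZ0 : ENNReal.ofReal Z ≠ 0 := (ENNReal.ofReal_pos.2 hZ).ne'
    have hinv : (ENNReal.ofReal Z)⁻¹ ≠ ⊤ := ENNReal.inv_ne_top.2 hZ0
    have hjd : IsDist jinx := by
      refine ⟨fun y => div_nonneg (gmin_nonneg hsk hp y) hZ.le, ?_⟩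
      have h := (summable_gmin hsk hp).hasSum.div_const Z
      rwa [show (∑' y, gmin s p y) / Z = 1 from div_self hZ.ne'] at h
    have hmul : ∀ y, (ENNReal.ofReal Z)⁻¹ * ENNReal.ofReal (gmin s p y)
        = ENNReal.ofReal (jinx y) := fun y => by
      rw [ENNReal.ofReal_div_of_pos hZ, ENNReal.div_eq_inv_mul]
    have hlow : ∀ q : Y → ℝ, IsDist q → (ENNReal.ofReal Z)⁻¹ ≤ worstRob s p q := fun q hq => by
      by_cases hfin : worstRob s p q = ⊤
      · exact hfin ▸ le_top
      · rw [← one_div]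
        exact ENNReal.div_le_of_le_mul (one_le_worstRob_mul hsk hp hq hfin)
    have hj : worstRob s p jinx = (ENNReal.ofReal Z)⁻¹ :=
      le_antisymm ((worstRob_le_iff hsk p jinx hinv).2 fun y => (hmul y).ge) (hlow jinx hjd)
    refine ⟨hj, fun q hq hne => ?_, ?_⟩
    · by_contra! hle
      have hqj : q ≤ jinx := fun y =>
        (ENNReal.ofReal_le_ofReal_iff (hjd.1 y)).1
          (((worstRob_le_iff hsk p q hinv).1 hle y).trans_eq (hmul y))
      -- A strict inequality at one point would make the two total masses differ.
      exact (hasSum_strict_mono hq.2 hjd.2 (lt_of_le_of_ne hqj hne)).false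
    · exact le_antisymm (hj ▸ iInf_le (fun q : {f : Y → ℝ // IsDist f} => worstRob s p q.1)
        ⟨jinx, hjd⟩) (le_iInf fun q => hlow q.1 q.2)
  · by_contra hfin
    have h := one_le_worstRob_mul hsk hp hq hfin
    rw [show ∑' y, gmin s p y = 0 from hZ] at h
    simp at h
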